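/- arXiv:1906.02162 — 2 statements merged into one kernel-verified Lean document; each statement's English description precedes it below -/
import Mathlib

section
/- Let 1 < p < ∞, 1 ≤ q < ∞, and Γ₁, Γ₂ arbitrary index sets. Then the pair (ℓ_p(Γ₁), ℓ_q(Γ₂)) has the weak maximizing property: any bounded linear operator T : ℓ_p(Γ₁) → ℓ_q(Γ₂) admitting a non-weakly null maximizing sequence attains its norm. -/
open Filter Topology
open scoped ENNReal

section helpers

/-- Brezis-Lieb splitting of the `ℓ_p` norm. -/
theorem wmp_split {𝕜 : Type*} [RCLike 𝕜] {p : ℝ≥0∞} [Fact (1 ≤ p)] (hp' : p ≠ ⊤)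
    {Γ ι : Type*} (U : Filter ι) (g : ι → lp (fun _ : Γ => 𝕜) p) (b : ℝ)
    (hg : ∀ i, Tendsto (fun n => g n i) U (𝓝 0))
    (hb : Tendsto (fun n => ‖g n‖) U (𝓝 b)) (hb0 : 0 ≤ b) (f : lp (fun _ : Γ => 𝕜) p) :
    Tendsto (fun n => ‖f + g n‖) U
      (𝓝 ((‖f‖ ^ p.toReal + b ^ p.toReal) ^ (1 / p.toReal))) := by
  classical
  have hP1 : 1 ≤ p.toReal := by
    have := ENNReal.toReal_mono hp' (Fact.out : 1 ≤ p)
    simpa using this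
  have hP : 0 < p.toReal := by linarith
  set P := p.toReal with hPdef
  set S : Finset Γ → lp (fun _ : Γ => 𝕜) p := fun s => ∑ i ∈ s, lp.single p i (f i) with hS
  have hSf : Tendsto S atTop (𝓝 f) := lp.hasSum_single hp' f
  have key : ∀ s : Finset Γ, Tendsto (fun n => ‖S s + g n‖) U
      (𝓝 ((‖S s‖ ^ P + b ^ P) ^ (1 / P))) := by
    intro s
    have hSi : ∀ i ∈ s, S s i = f i := by
      intro i hi
      simp only [hS, lp.coeFn_sum, Finset.sum_apply, lp.coeFn_single, Finset.sum_pi_single]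
      simp [hi]
    have h1 : ∀ n, ‖S s + g n‖ ^ P
        = ‖g n‖ ^ P + ∑ i ∈ s, (‖f i + g n i‖ ^ P - ‖g n i‖ ^ P) := by
      intro n
      have e1 := lp.norm_sub_norm_compl_sub_single hP (S s + g n) s
      have e2 := lp.norm_sub_norm_compl_sub_single hP (g n) s
      have e3 : S s + g n - ∑ i ∈ s, lp.single p i ((S s + g n) i)
          = g n - ∑ i ∈ s, lp.single p i (g n i) := by
        have : ∑ i ∈ s, lp.single (E := fun _ : Γ => 𝕜) p i ((S s + g n) i)
            = S s + ∑ i ∈ s, lp.single p i (g n i) := by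
          rw [hS, ← Finset.sum_add_distrib]
          refine Finset.sum_congr rfl fun i hi => ?_
          rw [← lp.single_add]
          congr 1
          rw [lp.coeFn_add, Pi.add_apply, hSi i hi]
        rw [this]; abel
      have e4 : ∑ i ∈ s, ‖(S s + g n) i‖ ^ P = ∑ i ∈ s, ‖f i + g n i‖ ^ P := by
        refine Finset.sum_congr rfl fun i hi => ?_
        rw [lp.coeFn_add, Pi.add_apply, hSi i hi]
      rw [e3, e4] at e1
      rw [Finset.sum_sub_distrib]
      linarith
    have h2 : Tendsto (fun n => ‖S s + g n‖ ^ P) U (𝓝 (‖S s‖ ^ P + b ^ P)) := by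
      have e : ‖S s‖ ^ P + b ^ P
          = b ^ P + ∑ i ∈ s, (‖f i + 0‖ ^ P - ‖(0 : 𝕜)‖ ^ P) := by
        rw [hS, lp.norm_sum_single hP (fun i => f i) s]
        simp [Real.zero_rpow hP.ne', add_comm, ← hPdef]
      rw [e]
      simp_rw [h1]
      refine (hb.rpow_const (Or.inr hP.le)).add (tendsto_finsetSum _ fun i _ => ?_)
      exact ((tendsto_const_nhds.add (hg i)).norm.rpow_const (Or.inr hP.le)).sub
        ((hg i).norm.rpow_const (Or.inr hP.le))
    have h3 := h2.rpow_const (p := 1 / P) (Or.inr (by positivity))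
    refine h3.congr fun n => ?_
    rw [one_div, Real.rpow_rpow_inv (norm_nonneg _) hP.ne']
  have hF : Tendsto (fun s => (‖S s‖ ^ P + b ^ P) ^ (1 / P)) atTop
      (𝓝 ((‖f‖ ^ P + b ^ P) ^ (1 / P))) :=
    ((hSf.norm.rpow_const (Or.inr hP.le)).add_const _).rpow_const (Or.inr (by positivity))
  rw [Metric.tendsto_nhds]
  intro ε hε
  have hε3 : 0 < ε / 3 := by positivity
  obtain ⟨s, hs1, hs2⟩ := ((Metric.tendsto_nhds.1 hF _ hε3).and
    (Metric.tendsto_nhds.1 hSf _ hε3)).exists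
  filter_upwards [Metric.tendsto_nhds.1 (key s) _ hε3] with n hn
  rw [Real.dist_eq] at *
  rw [dist_eq_norm] at hs2
  have h4 : |‖f + g n‖ - ‖S s + g n‖| ≤ ‖S s - f‖ := by
    refine (abs_norm_sub_norm_le _ _).trans ?_
    rw [← norm_neg]; apply le_of_eq; congr 1; abel
  rw [abs_lt] at *
  rw [abs_le] at h4
  constructor <;> linarith

/-- The one-variable estimate behind Pitt's theorem. -/
theorem wmp_real {N c b P Q : ℝ} (hN : 0 ≤ N) (hc : 0 ≤ c) (hb : 0 ≤ b) (hQ : 0 < Q)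
    (hPQ : Q < P)
    (h : ∀ t : ℝ, 0 < t → N ^ Q + (t * c) ^ Q ≤ N ^ Q * (1 + (t * b) ^ P) ^ (Q / P)) :
    c = 0 := by
  have hP : 0 < P := hQ.trans hPQ
  have h1 : ∀ t : ℝ, 0 < t → c ^ Q ≤ (N ^ Q * (Q / P) * b ^ P) * t ^ (P - Q) := by
    intro t ht
    have h2 := h t ht
    have h3 := rpow_one_add_le_one_add_mul_self (s := (t * b) ^ P)
      (by have : 0 ≤ (t * b) ^ P := by positivity
          linarith) (p := Q / P) (by positivity) (by rw [div_le_one hP]; exact hPQ.le)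
    have h4 : N ^ Q * (1 + (t * b) ^ P) ^ (Q / P) ≤ N ^ Q * (1 + Q / P * (t * b) ^ P) :=
      mul_le_mul_of_nonneg_left h3 (by positivity)
    rw [Real.mul_rpow ht.le hc] at h2
    rw [Real.mul_rpow ht.le hb] at h4 h2
    have h5 : t ^ P = t ^ Q * t ^ (P - Q) := by rw [← Real.rpow_add ht]; congr 1; ring
    have h6 : 0 < t ^ Q := by positivity
    have h7 : t ^ Q * c ^ Q ≤ t ^ Q * ((N ^ Q * (Q / P) * b ^ P) * t ^ (P - Q)) := by
      rw [h5] at h4 h2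
      nlinarith
    exact le_of_mul_le_mul_left h7 h6
  have h2 : Tendsto (fun t : ℝ => (N ^ Q * (Q / P) * b ^ P) * t ^ (P - Q)) (𝓝[>] 0) (𝓝 0) := by
    have : Tendsto (fun t : ℝ => t ^ (P - Q)) (𝓝[>] 0) (𝓝 0) := by
      have := (Real.continuousAt_rpow_const 0 (P - Q) (Or.inr (by linarith))).tendsto
      rw [Real.zero_rpow (by linarith)] at this
      exact this.mono_left nhdsWithin_le_nhds
    simpa using this.const_mul (N ^ Q * (Q / P) * b ^ P)
  have h3 : c ^ Q ≤ 0 := ge_of_tendsto h2 (by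
    filter_upwards [self_mem_nhdsWithin] with t ht using h1 t ht)
  by_contra hne
  have : 0 < c := lt_of_le_of_ne hc (Ne.symm hne)
  have : 0 < c ^ Q := by positivity
  linarith

/-- Pitt-type vanishing. -/
theorem wmp_vanish {𝕜 V W : Type*} [RCLike 𝕜] [NormedAddCommGroup V] [NormedSpace 𝕜 V]
    [NormedAddCommGroup W] [NormedSpace 𝕜 W] (T : V →L[𝕜] W)
    {c b P Q : ℝ} (hc : 0 ≤ c) (hb : 0 ≤ b) (hQ : 0 < Q) (hPQ : Q < P)
    (h : ∀ z : V, ∀ t : ℝ, 0 < t →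
      ‖T z‖ ^ Q + (t * c) ^ Q ≤ ‖T‖ ^ Q * (‖z‖ ^ P + (t * b) ^ P) ^ (Q / P)) :
    c = 0 := by
  have hP : 0 < P := hQ.trans hPQ
  refine wmp_real (norm_nonneg T) hc hb hQ hPQ fun t ht => ?_
  set R := ‖T‖ ^ Q * (1 + (t * b) ^ P) ^ (Q / P) with hR
  have hz : ∀ z : V, ‖z‖ ≤ 1 → ‖T z‖ ^ Q ≤ R - (t * c) ^ Q := by
    intro z hz
    have h1 := h z t ht
    have h2 : ‖z‖ ^ P ≤ 1 := Real.rpow_le_one (norm_nonneg _) hz hP.le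
    have h3 : ‖T‖ ^ Q * (‖z‖ ^ P + (t * b) ^ P) ^ (Q / P) ≤ R := by
      rw [hR]; gcongr
    linarith
  have hK : 0 ≤ R - (t * c) ^ Q := by
    have := hz 0 (by simp)
    exact le_trans (by positivity) this
  have h5 : ‖T‖ ≤ (R - (t * c) ^ Q) ^ (1 / Q) := by
    refine le_of_forall_lt fun r hr => ?_
    obtain ⟨z, hz1, hz2⟩ := T.exists_lt_apply_of_lt_opNorm hr
    refine hz2.trans_le ?_
    have := Real.rpow_le_rpow (by positivity) (hz z hz1.le) (z := 1 / Q) (by positivity)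
    rw [one_div, Real.rpow_rpow_inv (norm_nonneg _) hQ.ne'] at this
    rwa [one_div]
  have h6 := Real.rpow_le_rpow (norm_nonneg _) h5 hQ.le
  rw [one_div, Real.rpow_inv_rpow hK hQ.ne'] at h6
  linarith

/-- Bounded real families converge along ultrafilters. -/
theorem wmp_ultra {ι E : Type*} [NormedAddCommGroup E] [ProperSpace E] (U : Ultrafilter ι)
    (u : ι → E) (M : ℝ) (h : ∀ n, ‖u n‖ ≤ M) : ∃ a, Tendsto u U (𝓝 a) := by
  obtain ⟨a, -, ha⟩ := (isCompact_closedBall (0 : E) M).ultrafilter_le_nhds (U.map u) (by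
    rw [le_principal_iff]
    exact Filter.mem_map.2 (Filter.univ_mem' fun n => by simpa using h n))
  exact ⟨a, ha⟩

/-- Pointwise null bounded families are weakly null in `ℓ_p`, `1 < p < ∞`. -/
theorem wmp_weak {𝕜 : Type*} [RCLike 𝕜] {p : ℝ≥0∞} [Fact (1 ≤ p)] (hp : 1 < p) (hp' : p ≠ ⊤)
    {Γ ι : Type*} (U : Ultrafilter ι) (g : ι → lp (fun _ : Γ => 𝕜) p) (b : ℝ)
    (M : ℝ) (hM : ∀ n, ‖g n‖ ≤ M)
    (hg : ∀ i, Tendsto (fun n => g n i) U (𝓝 0))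
    (hb : Tendsto (fun n => ‖g n‖) U (𝓝 b)) (hb0 : 0 ≤ b)
    (f : lp (fun _ : Γ => 𝕜) p →L[𝕜] 𝕜) : Tendsto (fun n => f (g n)) U (𝓝 0) := by
  have hP1 : 1 < p.toReal := by
    have := (ENNReal.toReal_lt_toReal (by simp) hp').2 hp
    simpa using this
  obtain ⟨w, hw⟩ := wmp_ultra U (fun n => f (g n)) (‖f‖ * M) fun n =>
    (f.le_opNorm _).trans (mul_le_mul_of_nonneg_left (hM n) (norm_nonneg _))
  have : ‖w‖ = 0 := by
    refine wmp_vanish f (norm_nonneg w) hb0 one_pos hP1 fun z t ht => ?_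
    obtain ⟨c1, hc1, hc1'⟩ := RCLike.exists_norm_eq_mul_self (f z)
    obtain ⟨c2, hc2, hc2'⟩ := RCLike.exists_norm_eq_mul_self w
    have hk : ‖(t : 𝕜) * c2‖ = t := by
      rw [norm_mul, hc2, mul_one, RCLike.norm_ofReal, abs_of_pos ht]
    have s1 := wmp_split hp' (U : Filter ι) (fun n => ((t : 𝕜) * c2) • g n) (t * b)
      (fun i => by simpa using (hg i).const_mul ((t : 𝕜) * c2))
      (by simpa only [norm_smul, hk] using hb.const_mul t) (by positivity) (c1 • z)
    have s2 : Tendsto (fun n => ‖f (c1 • z + ((t : 𝕜) * c2) • g n)‖) U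
        (𝓝 (‖f z‖ + t * ‖w‖)) := by
      have : Tendsto (fun n => f (c1 • z + ((t : 𝕜) * c2) • g n)) U
          (𝓝 (c1 * f z + (t : 𝕜) * c2 * w)) := by
        simp only [map_add, map_smul, smul_eq_mul]
        exact (hw.const_mul _).const_add _
      have e : c1 * f z + (t : 𝕜) * c2 * w = ((‖f z‖ + t * ‖w‖ : ℝ) : 𝕜) := by
        rw [mul_assoc, ← hc1', ← hc2']; push_cast; rfl
      have h3 := this.norm
      rwa [e, RCLike.norm_ofReal, abs_of_nonneg (by positivity)] at h3
    have s3 := le_of_tendsto_of_tendsto' s2 (s1.const_mul ‖f‖) fun n => f.le_opNorm _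
    rw [norm_smul, hc1, one_mul] at s3
    simpa using s3
  rw [norm_eq_zero] at this
  rwa [this] at hw

end helpers

/-- for `1 < p < ∞`, `1 ≤ q < ∞` and arbitrary index sets `Γ₁, Γ₂`, the
pair `(ℓ_p(Γ₁), ℓ_q(Γ₂))` has the weak maximizing property: a bounded linear operator
admitting a maximizing sequence not converging weakly to `0` attains its norm. -/
theorem weak_maximizing_lp_lq_general_index {𝕜 : Type*} [RCLike 𝕜] (p q : ℝ≥0∞)
    [Fact (1 ≤ p)] [Fact (1 ≤ q)] (hp : 1 < p) (hp' : p ≠ ⊤) (hq' : q ≠ ⊤)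
    (Γ₁ Γ₂ : Type*)
    (T : lp (fun _ : Γ₁ => 𝕜) p →L[𝕜] lp (fun _ : Γ₂ => 𝕜) q)
    (x : ℕ → lp (fun _ : Γ₁ => 𝕜) p)
    (hx1 : ∀ n, ‖x n‖ = 1)
    (hmax : Tendsto (fun n => ‖T (x n)‖) atTop (𝓝 ‖T‖))
    (hnw : ¬ ∀ f : lp (fun _ : Γ₁ => 𝕜) p →L[𝕜] 𝕜,
      Tendsto (fun n => f (x n)) atTop (𝓝 0)) :
    ∃ x₀, ‖x₀‖ = 1 ∧ ‖T x₀‖ = ‖T‖ := by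
  have hP1 : 1 < p.toReal := by
    have := (ENNReal.toReal_lt_toReal (by simp) hp').2 hp
    simpa using this
  have hQ1 : 1 ≤ q.toReal := by
    have := ENNReal.toReal_mono hq' (Fact.out : 1 ≤ q)
    simpa using this
  have hP : 0 < p.toReal := by linarith
  have hQ : 0 < q.toReal := by linarith
  push Not at hnw
  obtain ⟨f, hf⟩ := hnw
  -- an ultrafilter witnessing that `f (x n)` does not tend to `0`
  obtain ⟨U, hU, hfU⟩ : ∃ U : Ultrafilter ℕ, (U : Filter ℕ) ≤ atTop ∧
      ¬ Tendsto (fun n => f (x n)) U (𝓝 0) := by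
    by_contra hcon
    push Not at hcon
    exact hf (tendsto_iff_ultrafilter _ _ _ |>.2 fun U hU => hcon U hU)
  -- the pointwise limit
  have hco : ∀ i, ∃ a : 𝕜, Tendsto (fun n => x n i) U (𝓝 a) := fun i =>
    wmp_ultra U _ 1 fun n => (lp.norm_apply_le_norm (by
      intro h0; rw [h0] at hp; simp at hp) (x n) i).trans (hx1 n).le
  choose a ha using hco
  have hpi : Tendsto (id fun n => x n : ℕ → ∀ i, (fun _ : Γ₁ => 𝕜) i) U (𝓝 a) :=
    tendsto_pi_nhds.2 ha
  have hmem : Memℓp a p := lp.memℓp_of_tendsto (F := x) (by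
    rw [isBounded_iff_forall_norm_le]
    exact ⟨1, by rintro _ ⟨n, rfl⟩; exact (hx1 n).le⟩) hpi
  obtain ⟨y, hy⟩ : ∃ y : lp (fun _ : Γ₁ => 𝕜) p, ∀ i, y i = a i := ⟨⟨a, hmem⟩, fun i => rfl⟩
  set g : ℕ → lp (fun _ : Γ₁ => 𝕜) p := fun n => x n - y with hgdef
  have hgM : ∀ n, ‖g n‖ ≤ 1 + ‖y‖ := fun n => by
    have := norm_sub_le (x n) y
    rwa [hx1 n] at this
  have hg0 : ∀ i, Tendsto (fun n => g n i) U (𝓝 0) := fun i => by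
    have := (ha i).sub_const (a i)
    rw [sub_self] at this
    refine this.congr fun n => ?_
    rw [hgdef, lp.coeFn_sub, Pi.sub_apply, hy]
  obtain ⟨b, hb⟩ := wmp_ultra U (fun n => ‖g n‖) (1 + ‖y‖) fun n => by simpa using hgM n
  have hb0 : 0 ≤ b := ge_of_tendsto' hb fun n => norm_nonneg _
  have hweak := wmp_weak hp hp' U g b (1 + ‖y‖) hgM hg0 hb hb0
  have hxg : ∀ n, x n = y + g n := fun n => (add_sub_cancel y (x n)).symm
  have hy0 : y ≠ 0 := by
    rintro h0
    refine hfU ((hweak f).congr fun n => ?_)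
    rw [hxg n, h0, zero_add]
  obtain ⟨c, hc⟩ := wmp_ultra U (fun n => ‖T (g n)‖) (‖T‖ * (1 + ‖y‖)) fun n => by
    rw [norm_norm]
    exact (T.le_opNorm _).trans (mul_le_mul_of_nonneg_left (hgM n) (norm_nonneg _))
  have hc0 : 0 ≤ c := ge_of_tendsto' hc fun n => norm_nonneg _
  have hTg0 : ∀ j, Tendsto (fun n => T (g n) j) U (𝓝 0) := fun j =>
    hweak ((lp.evalCLM 𝕜 (fun _ : Γ₂ => 𝕜) q j).comp T)
  -- norm splittings
  have hsum : ‖y‖ ^ p.toReal + b ^ p.toReal = 1 := by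
    have s1 := wmp_split hp' (U : Filter ℕ) g b hg0 hb hb0 y
    have s2 : Tendsto (fun n => ‖y + g n‖) U (𝓝 1) := by
      refine tendsto_const_nhds.congr fun n => ?_
      rw [← hxg n, hx1 n]
    have s3 := tendsto_nhds_unique s1 s2
    have s4 : ((‖y‖ ^ p.toReal + b ^ p.toReal) ^ (1 / p.toReal)) ^ p.toReal = 1 := by
      rw [s3, Real.one_rpow]
    rwa [one_div, Real.rpow_inv_rpow (by positivity) hP.ne'] at s4
  have hTsum : ‖T y‖ ^ q.toReal + c ^ q.toReal = ‖T‖ ^ q.toReal := by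
    have s1 := wmp_split hq' (U : Filter ℕ) (fun n => T (g n)) c hTg0 hc hc0 (T y)
    have s2 : Tendsto (fun n => ‖T y + T (g n)‖) U (𝓝 ‖T‖) := by
      refine (hmax.mono_left hU).congr fun n => ?_
      rw [hxg n, map_add]
    have s3 := tendsto_nhds_unique s1 s2
    rw [← s3, one_div, Real.rpow_inv_rpow (by positivity) hQ.ne']
  have hcb : c ≤ ‖T‖ * b :=
    le_of_tendsto_of_tendsto' hc (hb.const_mul ‖T‖) fun n => T.le_opNorm _
  have hy1 : ‖y‖ ≤ 1 := by
    by_contra hlt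
    push Not at hlt
    have h1 := Real.one_lt_rpow hlt hP
    have h2 : 0 ≤ b ^ p.toReal := by positivity
    linarith
  have hmain : ‖T‖ * ‖y‖ ≤ ‖T y‖ := by
    rcases lt_or_ge q.toReal p.toReal with hlt | hge
    · have hcz : c = 0 := by
        refine wmp_vanish T hc0 hb0 hQ hlt fun z t ht => ?_
        have hk : ‖(t : 𝕜)‖ = t := by rw [RCLike.norm_ofReal, abs_of_pos ht]
        have s1 := wmp_split hp' (U : Filter ℕ) (fun n => (t : 𝕜) • g n) (t * b)
          (fun i => by simpa only [mul_zero, lp.coeFn_smul, Pi.smul_apply, smul_eq_mul] using (hg0 i).const_mul (t : 𝕜))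
          (by simpa only [norm_smul, hk] using hb.const_mul t) (by positivity) z
        have s2 := wmp_split hq' (U : Filter ℕ) (fun n => (t : 𝕜) • T (g n)) (t * c)
          (fun i => by simpa only [mul_zero, lp.coeFn_smul, Pi.smul_apply, smul_eq_mul] using (hTg0 i).const_mul (t : 𝕜))
          (by simpa only [norm_smul, hk] using hc.const_mul t) (by positivity) (T z)
        have s3 := le_of_tendsto_of_tendsto' s2 (s1.const_mul ‖T‖) fun n => by
          have := T.le_opNorm (z + (t : 𝕜) • g n)
          rwa [map_add, map_smul] at this
        have s4 := Real.rpow_le_rpow (by positivity) s3 hQ.le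
        rw [one_div, Real.rpow_inv_rpow (by positivity) hQ.ne',
          Real.mul_rpow (norm_nonneg T) (by positivity), ← Real.rpow_mul (by positivity)] at s4
        rwa [one_div_mul_eq_div] at s4
      rw [hcz, Real.zero_rpow hQ.ne', add_zero] at hTsum
      have h1 : ‖T y‖ = ‖T‖ :=
        (Real.rpow_left_inj (norm_nonneg _) (norm_nonneg _) hQ.ne').1 hTsum
      rw [h1]
      exact mul_le_of_le_one_right (norm_nonneg _) hy1
    · have h1 : ‖y‖ ^ q.toReal + b ^ q.toReal ≤ 1 := by
        have h2 := Real.add_rpow_le_rpow_add (a := ‖y‖ ^ p.toReal) (b := b ^ p.toReal)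
          (by positivity) (by positivity) (p := q.toReal / p.toReal) ((one_le_div hP).2 hge)
        rw [hsum, Real.one_rpow, ← Real.rpow_mul (norm_nonneg _), ← Real.rpow_mul hb0,
          mul_div_cancel₀ _ hP.ne'] at h2
        exact h2
      have h3 : c ^ q.toReal ≤ ‖T‖ ^ q.toReal * b ^ q.toReal := by
        rw [← Real.mul_rpow (norm_nonneg _) hb0]
        exact Real.rpow_le_rpow hc0 hcb hQ.le
      have h4 : (‖T‖ * ‖y‖) ^ q.toReal ≤ ‖T y‖ ^ q.toReal := by
        rw [Real.mul_rpow (norm_nonneg _) (norm_nonneg _)]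
        have h5 : 0 ≤ ‖T‖ ^ q.toReal := by positivity
        nlinarith
      exact (Real.rpow_le_rpow_iff (by positivity) (norm_nonneg _) hQ).1 h4
  have hny : 0 < ‖y‖ := norm_pos_iff.2 hy0
  refine ⟨((‖y‖⁻¹ : ℝ) : 𝕜) • y, ?_, ?_⟩
  · rw [norm_smul, RCLike.norm_ofReal, abs_of_pos (by positivity), inv_mul_cancel₀ hny.ne']
  · have h6 : ‖T y‖ = ‖T‖ * ‖y‖ := le_antisymm (T.le_opNorm y) hmain
    rw [map_smul, norm_smul, RCLike.norm_ofReal, abs_of_pos (by positivity), h6]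
    field_simp
end

section
/- Let E be a non-reflexive Banach space and F a nonzero Banach space. Then the pair (E, F) fails the weak maximizing property. Consequently, a pair (E, F) with F ≠ {0} has the weak maximizing property only if E is reflexive; in particular, if E has the weak maximizing property (i.e., the pair (E, E) does), then E is reflexive. -/
open Filter Topology

theorem james_helly {E : Type*} [NormedAddCommGroup E] [NormedSpace ℝ E]
    (X : StrongDual ℝ (StrongDual ℝ E)) (hX : ‖X‖ ≤ 1) (s : Finset (StrongDual ℝ E))
    (hs : ∀ f ∈ s, 1 / 2 < X f) : ∃ x : E, ‖x‖ ≤ 1 ∧ ∀ f ∈ s, 1 / 2 < f x := by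
  classical
  by_contra hcon
  push Not at hcon
  let L : E →L[ℝ] (s → ℝ) := ContinuousLinearMap.pi fun i => (i : StrongDual ℝ E)
  let O : Set (s → ℝ) := Set.pi Set.univ fun _ => Set.Ioi (1 / 2)
  have hO1 : Convex ℝ O := convex_pi fun i _ => convex_Ioi _
  have hO2 : IsOpen O := isOpen_set_pi Set.finite_univ fun i _ => isOpen_Ioi
  have hA : Convex ℝ (L '' Metric.closedBall 0 1) :=
    (convex_closedBall (0 : E) 1).linear_image L.toLinearMap
  have hdisj : Disjoint O (L '' Metric.closedBall 0 1) := by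
    rw [Set.disjoint_left]
    rintro v hv ⟨x, hx, rfl⟩
    obtain ⟨f, hf, hfx⟩ := hcon x (by simpa using hx)
    have := hv ⟨f, hf⟩ (Set.mem_univ _)
    simp [L] at this
    linarith
  obtain ⟨φ, u, h1, h2⟩ := geometric_hahn_banach_open hO1 hO2 hA hdisj
  let h : StrongDual ℝ E := φ.comp L
  have hφ : ∀ v : s → ℝ, φ v = ∑ i, v i * φ (Pi.single i 1) := by
    intro v
    conv_lhs => rw [← Finset.univ_sum_single v]
    rw [map_sum]
    refine Finset.sum_congr rfl fun i _ => ?_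
    rw [← smul_eq_mul, ← map_smul]
    congr 1
    rw [← Pi.single_smul]
    simp
  have hh : h = ∑ i : s, φ (Pi.single i 1) • (i : StrongDual ℝ E) := by
    ext x
    simp only [h, ContinuousLinearMap.comp_apply, sum_apply,
      smul_apply, smul_eq_mul]
    rw [hφ]
    refine Finset.sum_congr rfl fun i _ => ?_
    simp [L, mul_comm]
  have hXh : X h = φ (fun i : s => X i) := by
    rw [hφ, hh, map_sum]
    refine Finset.sum_congr rfl fun i _ => ?_
    rw [map_smul, smul_eq_mul, mul_comm]
  have h3 : X h < u := by
    rw [hXh]; exact h1 _ fun i _ => hs i i.2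
  have h4 : ∀ x : E, ‖x‖ ≤ 1 → u ≤ h x := fun x hx => h2 _ ⟨x, by simpa using hx, rfl⟩
  have h5 : ‖h‖ ≤ -u := by
    have hu : u ≤ 0 := by simpa using h4 0 (by simp)
    refine ContinuousLinearMap.opNorm_le_of_unit_norm (by linarith) fun x hx => ?_
    rw [Real.norm_eq_abs, abs_le]
    have e1 := h4 x hx.le
    have e2 := h4 (-x) (by simpa using hx.le)
    rw [map_neg] at e2
    constructor <;> linarith
  have h6 := X.le_opNorm h
  rw [Real.norm_eq_abs] at h6
  have h7 := neg_abs_le (X h)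
  have h8 : ‖X‖ * ‖h‖ ≤ 1 * ‖h‖ := by gcongr
  linarith

theorem james_ann {E : Type*} [NormedAddCommGroup E] [NormedSpace ℝ E]
    (X : StrongDual ℝ (StrongDual ℝ E))
    (hX : ∀ x : E, 3 / 4 ≤ ‖X - NormedSpace.inclusionInDoubleDual ℝ E x‖) (s : Finset E) :
    ∃ f : StrongDual ℝ E, ‖f‖ ≤ 1 ∧ (∀ x ∈ s, f x = 0) ∧ 1 / 2 < X f := by
  let J := NormedSpace.inclusionInDoubleDual ℝ E
  let M : Submodule ℝ (StrongDual ℝ E) := ⨅ i : s, LinearMap.ker (J i).toLinearMap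
  have hM : ∀ f, f ∈ M ↔ ∀ x ∈ s, f x = 0 := by
    intro f
    simp [M, J, Submodule.mem_iInf]
  have key : ∃ f ∈ M, ‖f‖ / 2 < |X f| := by
    by_contra hcon
    push Not at hcon
    let XM : StrongDual ℝ M := X.comp M.subtypeL
    obtain ⟨Y, hY, hYn⟩ := exists_extension_norm_eq M XM
    have hn : ‖Y‖ ≤ 1 / 2 := by
      rw [hYn]
      refine ContinuousLinearMap.opNorm_le_bound _ (by norm_num) fun f => ?_
      have := hcon f f.2
      simp only [XM, ContinuousLinearMap.comp_apply, Submodule.subtypeL_apply, Real.norm_eq_abs,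
        Submodule.coe_norm]
      linarith
    have hspan : (X - Y).toLinearMap ∈ Submodule.span ℝ
        (Set.range fun i : s => (J i).toLinearMap) := by
      refine mem_span_of_iInf_ker_le_ker fun f hf => ?_
      have := hY ⟨f, hf⟩
      simp only [LinearMap.mem_ker, ContinuousLinearMap.coe_coe, sub_apply]
      simp [XM] at this
      linarith
    obtain ⟨c, hc⟩ := (Submodule.mem_span_range_iff_exists_fun ℝ).1 hspan
    have : X - J (∑ i, c i • (i : E)) = Y := by
      ext f
      have := LinearMap.congr_fun hc f
      simp [J] at this ⊢
      linarith
    have h1 := hX (∑ i, c i • (i : E))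
    change _ ≤ ‖X - J _‖ at h1
    rw [this] at h1
    linarith
  obtain ⟨f, hf, hlt⟩ := key
  have hf0 : f ≠ 0 := by
    rintro rfl
    simp at hlt
  have hpos : 0 < ‖f‖ := norm_pos_iff.2 hf0
  rw [hM] at hf
  rcases abs_cases (X f) with ⟨h, _⟩ | ⟨h, _⟩
  · refine ⟨‖f‖⁻¹ • f, ?_, ?_, ?_⟩
    · rw [norm_smul]; simp [hpos.ne']
    · intro x hx; simp [hf x hx]
    · rw [map_smul, smul_eq_mul, inv_mul_eq_div, lt_div_iff₀ hpos]; linarith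
  · refine ⟨-(‖f‖⁻¹ • f), ?_, ?_, ?_⟩
    · rw [norm_neg, norm_smul]; simp [hpos.ne']
    · intro x hx; simp [hf x hx]
    · rw [map_neg, map_smul, smul_eq_mul, inv_mul_eq_div, ← neg_div, lt_div_iff₀ hpos]; linarith

theorem james_seq {E : Type*} [NormedAddCommGroup E] [NormedSpace ℝ E] [CompleteSpace E]
    (h : ¬ Function.Surjective (NormedSpace.inclusionInDoubleDual ℝ E)) :
    ∃ (f : ℕ → StrongDual ℝ E) (x : ℕ → E), (∀ n, ‖f n‖ ≤ 1) ∧ (∀ n, ‖x n‖ ≤ 1) ∧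
      (∀ m n, m < n → f n (x m) = 0) ∧ ∀ m n, m ≤ n → 1 / 2 < f m (x n) := by
  classical
  let J := NormedSpace.inclusionInDoubleDual ℝ E
  let R : Submodule ℝ (StrongDual ℝ (StrongDual ℝ E)) := LinearMap.range J.toLinearMap
  have hRc : IsClosed (R : Set (StrongDual ℝ (StrongDual ℝ E))) := by
    have := (NormedSpace.inclusionInDoubleDualLi (E := E) ℝ).isometry.isUniformInducing.isComplete_range.isClosed
    convert! this
  have hne : ∃ X : StrongDual ℝ (StrongDual ℝ E), X ∉ R := by
    by_contra hcon
    push Not at hcon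
    exact h fun X => hcon X
  obtain ⟨X, _, hXn', hX'⟩ := riesz_lemma_of_lt_one (𝕜 := ℝ) (E := StrongDual ℝ (StrongDual ℝ E))
    (F := R) hRc hne (show (3 / 4 : ℝ) < 1 by norm_num)
  have hXn : ‖X‖ ≤ 1 := hXn'.le
  have hX : ∀ x : E, 3 / 4 ≤ ‖X - J x‖ := fun x => hX' _ ⟨x, rfl⟩
  obtain ⟨p, hp, hp'⟩ := exists_seq_of_forall_finset_exists
    (fun p : StrongDual ℝ E × E => ‖p.1‖ ≤ 1 ∧ ‖p.2‖ ≤ 1 ∧ 1 / 2 < X p.1 ∧ 1 / 2 < p.1 p.2)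
    (fun p q => q.1 p.2 = 0 ∧ 1 / 2 < p.1 q.2) (by
      intro s hs
      obtain ⟨f, hf1, hf2, hf3⟩ := james_ann X hX (s.image Prod.snd)
      obtain ⟨x, hx1, hx2⟩ := james_helly X hXn (insert f (s.image Prod.fst)) (by
        intro g hg
        rcases Finset.mem_insert.1 hg with rfl | hg
        · exact hf3
        · obtain ⟨q, hq, rfl⟩ := Finset.mem_image.1 hg
          exact (hs q hq).2.2.1)
      refine ⟨(f, x), ⟨hf1, hx1, hf3, hx2 f (Finset.mem_insert_self _ _)⟩, fun q hq => ⟨?_, ?_⟩⟩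
      · exact hf2 _ (Finset.mem_image_of_mem _ hq)
      · exact hx2 _ (Finset.mem_insert_of_mem (Finset.mem_image_of_mem _ hq)))
  refine ⟨fun n => (p n).1, fun n => (p n).2, fun n => (hp n).1, fun n => (hp n).2.1,
    fun m n hmn => (hp' m n hmn).1, fun m n hmn => ?_⟩
  rcases hmn.eq_or_lt with rfl | hlt
  · exact (hp _).2.2.2
  · exact (hp' m n hlt).2

/-- The convex hull of the tail of a sequence. -/
def jamesHull {V : Type*} [AddCommGroup V] [Module ℝ V] (g : ℕ → V) (n : ℕ) : Set V :=
  convexHull ℝ (g '' Set.Ici n)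

theorem jamesHull_sub {V : Type*} [AddCommGroup V] [Module ℝ V] {g g' : ℕ → V} {n m : ℕ}
    (hmn : n ≤ m) (h : ∀ k, m ≤ k → g' k ∈ jamesHull g k) : jamesHull g' m ⊆ jamesHull g n := by
  refine convexHull_min ?_ (convex_convexHull ℝ _)
  rintro _ ⟨k, hk, rfl⟩
  exact convexHull_mono (Set.image_mono (Set.Ici_subset_Ici.2 (hmn.trans hk))) (h k hk)

theorem jamesHull_self {V : Type*} [AddCommGroup V] [Module ℝ V] (g : ℕ → V) {n k : ℕ}
    (h : n ≤ k) : g k ∈ jamesHull g n :=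
  subset_convexHull ℝ _ ⟨k, h, rfl⟩

theorem jamesHull_norm {E : Type*} [NormedAddCommGroup E] [NormedSpace ℝ E] {g : ℕ → E}
    (hg : ∀ k, ‖g k‖ ≤ 1) {n : ℕ} {y : E} (hy : y ∈ jamesHull g n) : ‖y‖ ≤ 1 := by
  have : jamesHull g n ⊆ Metric.closedBall 0 1 := by
    refine convexHull_min ?_ (convex_closedBall _ _)
    rintro _ ⟨k, _, rfl⟩
    simpa using hg k
  simpa using this hy

section
variable {E : Type*} [NormedAddCommGroup E] [NormedSpace ℝ E]

/-- limsup of `(v - g k) x` is at most `r` on the unit ball. -/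
def JamesP (v : StrongDual ℝ E) (g : ℕ → StrongDual ℝ E) (r : ℝ) : Prop :=
  ∀ x : E, ‖x‖ ≤ 1 → ∀ s, r < s → ∀ᶠ k in atTop, v x - g k x < s

theorem JamesP.nonneg {v : StrongDual ℝ E} {g : ℕ → StrongDual ℝ E} {r : ℝ} (h : JamesP v g r) :
    0 ≤ r := by
  by_contra hr
  push Not at hr
  obtain ⟨k, hk⟩ := (h 0 (by simp) 0 hr).exists
  simp at hk

theorem JamesP.block {v : StrongDual ℝ E} {g g' : ℕ → StrongDual ℝ E} {r : ℝ} (h : JamesP v g r)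
    (hb : ∀ᶠ k in atTop, g' k ∈ jamesHull g k) : JamesP v g' r := by
  intro x hx s hs
  obtain ⟨N, hN⟩ := eventually_atTop.1 (h x hx s hs)
  filter_upwards [hb, eventually_ge_atTop N] with k hk hkN
  have : jamesHull g k ⊆ {f : StrongDual ℝ E | v x - s < f x} := by
    refine convexHull_min ?_ ?_
    · rintro _ ⟨j, hj, rfl⟩
      have := hN j (hkN.trans hj)
      simp only [Set.mem_ofPred_eq]; linarith
    · exact convex_halfSpace_gt (NormedSpace.inclusionInDoubleDual ℝ E x).toLinearMap.isLinear _
  have := this hk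
  simp only [Set.mem_ofPred_eq] at this
  linarith

theorem james_lower {v : StrongDual ℝ E} {g g' : ℕ → StrongDual ℝ E} {x : E} {r : ℝ}
    (h : ∀ k, r ≤ v x - g k x) {k : ℕ} (hb : g' k ∈ jamesHull g k) : r ≤ v x - g' k x := by
  have : jamesHull g k ⊆ {f : StrongDual ℝ E | f x ≤ v x - r} := by
    refine convexHull_min ?_ ?_
    · rintro _ ⟨j, hj, rfl⟩
      have := h j
      simp only [Set.mem_ofPred_eq]; linarith
    · exact convex_halfSpace_le (NormedSpace.inclusionInDoubleDual ℝ E x).toLinearMap.isLinear _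
  have := this hb
  simp only [Set.mem_ofPred_eq] at this
  linarith

theorem james_step (n : ℕ) (T ε : ℝ) (hε : 0 < ε) (u : StrongDual ℝ E)
    (g : {g : ℕ → StrongDual ℝ E // ∀ k, ‖g k‖ ≤ 1}) :
    ∃ (A : ℝ) (y : StrongDual ℝ E) (g' : {g : ℕ → StrongDual ℝ E // ∀ k, ‖g k‖ ≤ 1}),
      y ∈ jamesHull g.1 n ∧ (∀ k, g'.1 k ∈ jamesHull g.1 k) ∧ JamesP (u + T • y) g'.1 (A + ε) ∧
      (∃ x : E, ‖x‖ ≤ 1 ∧ ∀ k, A - ε ≤ (u + T • y) x - g'.1 k x) ∧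
      (∀ y' g'' r, y' ∈ jamesHull g.1 n → (∀ k, g'' k ∈ jamesHull g.1 k) →
        JamesP (u + T • y') g'' r → A ≤ r) ∧
      (∀ B, (∀ y' g'' r, y' ∈ jamesHull g.1 n → (∀ k, g'' k ∈ jamesHull g.1 k) →
        JamesP (u + T • y') g'' r → B ≤ r) → B ≤ A) := by
  obtain ⟨g, hg⟩ := g
  simp only
  let S : Set ℝ := {r | ∃ y' g'', y' ∈ jamesHull g n ∧ (∀ k, g'' k ∈ jamesHull g k) ∧
        JamesP (u + T • y') g'' r}
  have hbdd : BddBelow S := ⟨0, by rintro r ⟨_, _, _, _, h⟩; exact h.nonneg⟩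
  have hne : S.Nonempty := by
    refine ⟨‖u + T • g n‖ + 1, g n, g, jamesHull_self g le_rfl, fun k => jamesHull_self g le_rfl, ?_⟩
    intro x hx s hs
    refine Eventually.of_forall fun k => ?_
    have h1 := (u + T • g n).le_of_opNorm_le le_rfl x
    have h2 := (g k).le_of_opNorm_le (hg k) x
    have h3 := le_abs_self ((u + T • g n) x)
    have h4 := neg_abs_le ((g k) x)
    rw [Real.norm_eq_abs] at h1 h2
    have h5 : ‖u + T • g n‖ * ‖x‖ ≤ ‖u + T • g n‖ * 1 := by gcongr
    linarith
  obtain ⟨r, ⟨y, g1, hy, hg1, hP⟩, hr⟩ := exists_lt_of_csInf_lt hne (lt_add_of_pos_right (sInf S) hε)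
  have hnP : ¬ JamesP (u + T • y) g1 (sInf S - ε) := by
    intro h
    have := csInf_le hbdd (show sInf S - ε ∈ S from ⟨y, g1, hy, hg1, h⟩)
    linarith
  unfold JamesP at hnP
  push Not at hnP
  obtain ⟨x, hx, s, hs, hf⟩ := hnP
  obtain ⟨φ, hφ, hφs⟩ := extraction_of_frequently_atTop hf
  have hb : ∀ k, g1 (φ k) ∈ jamesHull g1 k := fun k => jamesHull_self g1 hφ.le_apply
  have hb' : ∀ k, g1 (φ k) ∈ jamesHull g k := fun k =>
    jamesHull_sub le_rfl (fun j _ => hg1 j) (hb k)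
  refine ⟨sInf S, y, ⟨fun k => g1 (φ k), fun k => jamesHull_norm hg (hb' k)⟩, hy, hb', ?_, ?_, ?_, ?_⟩
  · refine JamesP.block ?_ (Eventually.of_forall hb)
    intro x hx s hs
    exact hP x hx s (hr.trans hs)
  · refine ⟨x, hx, fun k => ?_⟩
    have := hφs k
    simp only
    linarith
  · intro y' g'' r h1 h2 h3
    exact csInf_le hbdd ⟨y', g'', h1, h2, h3⟩
  · intro B hB
    refine le_csInf hne ?_
    rintro r ⟨y', g'', h1, h2, h3⟩
    exact hB y' g'' r h1 h2 h3

theorem james_cluster (y : ℕ → StrongDual ℝ E) (hy : ∀ k, ‖y k‖ ≤ 1) :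
    ∃ w : StrongDual ℝ E, ‖w‖ ≤ 1 ∧
      ∀ x, Tendsto (fun k => y k x) (hyperfilter ℕ : Filter ℕ) (𝓝 (w x)) := by
  have hc := WeakDual.isCompact_closedBall (𝕜 := ℝ) (E := E) 0 1
  obtain ⟨w, hw, hlim⟩ := hc.ultrafilter_le_nhds
    ((hyperfilter ℕ).map fun k => StrongDual.toWeakDual (y k)) (by
      rw [le_principal_iff]
      refine Eventually.of_forall (f := (hyperfilter ℕ : Filter ℕ)) fun k => ?_
      simpa using hy k)
  refine ⟨WeakDual.toStrongDual w, by simpa using hw, fun x => ?_⟩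
  exact (WeakDual.eval_continuous x).continuousAt.tendsto.comp hlim

theorem james_real [CompleteSpace E]
    (hnr : ¬ Function.Surjective (NormedSpace.inclusionInDoubleDual ℝ E)) :
    ∃ φ : StrongDual ℝ E, φ ≠ 0 ∧ ∀ x : E, ‖x‖ ≤ 1 → φ x ≠ ‖φ‖ := by
  obtain ⟨f, z, hf, hz, hfz0, hfz⟩ := james_seq hnr
  obtain ⟨q, hq⟩ : ∃ q : ℝ, q = 1 / 16 := ⟨_, rfl⟩
  have hq0 : 0 < q := by rw [hq]; norm_num
  let ε : ℕ → ℝ := fun n => q ^ (n + 1) * (1 / 2) ^ n / 8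
  have hε : ∀ n, 0 < ε n := fun n => by positivity
  choose A Y G hY hG hP hx hA1 hA2 using fun (n : ℕ) =>
    james_step (E := E) n (q ^ n) (ε n) (hε n)
  let st : ℕ → StrongDual ℝ E × {g : ℕ → StrongDual ℝ E // ∀ k, ‖g k‖ ≤ 1} := fun n =>
    Nat.rec (0, ⟨f, hf⟩) (fun n s => (s.1 + ((1 - q) * q ^ n) • Y n s.1 s.2, G n s.1 s.2)) n
  let u : ℕ → StrongDual ℝ E := fun n => (st n).1
  let g : ℕ → ℕ → StrongDual ℝ E := fun n => (st n).2.1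
  let y : ℕ → StrongDual ℝ E := fun n => Y n (st n).1 (st n).2
  let a : ℕ → ℝ := fun n => A n (st n).1 (st n).2
  have hu0 : u 0 = 0 := rfl
  have hg0 : g 0 = f := rfl
  have hus : ∀ n, u (n + 1) = u n + ((1 - q) * q ^ n) • y n := fun n => rfl
  have hyg : ∀ n, y n ∈ jamesHull (g n) n := fun n => hY n _ _
  have hgs : ∀ n k, g (n + 1) k ∈ jamesHull (g n) k := fun n => hG n _ _
  have hPn : ∀ n, JamesP (u n + q ^ n • y n) (g (n + 1)) (a n + ε n) := fun n => hP n _ _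
  have hxn : ∀ n, ∃ x : E, ‖x‖ ≤ 1 ∧ ∀ k, a n - ε n ≤ (u n + q ^ n • y n) x - g (n + 1) k x :=
    fun n => hx n _ _
  have ha1 : ∀ n y' g'' r, y' ∈ jamesHull (g n) n → (∀ k, g'' k ∈ jamesHull (g n) k) →
      JamesP (u n + q ^ n • y') g'' r → a n ≤ r := fun n => hA1 n _ _
  have ha2 : ∀ n B, (∀ y' g'' r, y' ∈ jamesHull (g n) n → (∀ k, g'' k ∈ jamesHull (g n) k) →
      JamesP (u n + q ^ n • y') g'' r → B ≤ r) → B ≤ a n := fun n => hA2 n _ _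
  have hgn : ∀ n k, ‖g n k‖ ≤ 1 := fun n => (st n).2.2
  clear_value u g y a
  clear hA1 hA2 hx hP hG hY
  have hyn : ∀ n, ‖y n‖ ≤ 1 := fun n => jamesHull_norm (hgn n) (hyg n)
  -- monotonicity of the infima
  have hmono : Monotone a := by
    refine monotone_nat_of_le_succ fun n => ha2 (n + 1) _ fun y' g'' r h1 h2 h3 => ?_
    have h4 : jamesHull (g (n + 1)) (n + 1) ⊆ jamesHull (g n) n :=
      jamesHull_sub (Nat.le_succ n) fun k _ => hgs n k
    refine ha1 n ((1 - q) • y n + q • y') g'' r ?_ ?_ ?_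
    · exact (convex_convexHull ℝ _) (hyg n) (h4 h1) (by rw [hq]; norm_num) hq0.le (by ring)
    · intro k
      exact jamesHull_sub le_rfl (fun j _ => hgs n j) (h2 k)
    · convert h3 using 1
      rw [hus]
      module
  have ha0 : 1 / 2 ≤ a 0 := by
    refine ha2 0 _ fun y' g'' r h1 h2 h3 => ?_
    rw [hg0] at h1 h2
    rw [hu0, pow_zero, one_smul, zero_add] at h3
    obtain ⟨m, hm⟩ : ∃ m, y' ∈ convexHull ℝ (f '' Set.Iic m) := by
      have hU : jamesHull f 0 ⊆ ⋃ m, convexHull ℝ (f '' Set.Iic m) := by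
        refine convexHull_min ?_ ?_
        · rintro _ ⟨k, _, rfl⟩
          exact Set.mem_iUnion.2 ⟨k, subset_convexHull ℝ _ ⟨k, Set.mem_Iic.2 le_rfl, rfl⟩⟩
        · refine Directed.convex_iUnion (Monotone.directed_le ?_) fun i => convex_convexHull ℝ _
          intro i j hij
          exact convexHull_mono (Set.image_mono (Set.Iic_subset_Iic.2 hij))
      exact Set.mem_iUnion.1 (hU h1)
    have hy' : 1 / 2 < y' (z m) := by
      have : convexHull ℝ (f '' Set.Iic m) ⊆ {h : StrongDual ℝ E | 1 / 2 < h (z m)} := by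
        refine convexHull_min ?_ ?_
        · rintro _ ⟨k, hk, rfl⟩
          exact hfz k m hk
        · exact convex_halfSpace_gt
            (NormedSpace.inclusionInDoubleDual ℝ E (z m)).toLinearMap.isLinear _
      exact this hm
    have hg'' : ∀ k, m < k → g'' k (z m) = 0 := by
      intro k hk
      have : jamesHull f k ⊆ {h : StrongDual ℝ E | h (z m) = 0} := by
        refine convexHull_min ?_ ?_
        · rintro _ ⟨j, hj, rfl⟩
          exact hfz0 m j (lt_of_lt_of_le hk hj)
        · exact convex_hyperplane
            (NormedSpace.inclusionInDoubleDual ℝ E (z m)).toLinearMap.isLinear _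
      exact this (h2 k)
    by_contra hr
    push Not at hr
    obtain ⟨k, hk1, hk2⟩ := ((h3 (z m) (hz m) _ hr).and (eventually_gt_atTop m)).exists
    rw [hg'' k hk2] at hk1
    linarith
  have hgg : ∀ n m, n ≤ m → ∀ k, g m k ∈ jamesHull (g n) k := by
    intro n m hnm
    induction m, hnm using Nat.le_induction with
    | base => exact fun k => jamesHull_self _ le_rfl
    | succ m _ ih =>
      exact fun k => jamesHull_sub le_rfl (fun j _ => ih j) (hgs m k)
  have hyk : ∀ n k, n ≤ k → y k ∈ jamesHull (g n) k := fun n k hnk =>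
    jamesHull_sub le_rfl (fun j _ => hgg n k hnk j) (hyg k)
  obtain ⟨w, hw, hlim⟩ := james_cluster y hyn
  have hup : ∀ n, ‖u n + q ^ n • y n - w‖ ≤ a n + ε n := by
    intro n
    have hPy : JamesP (u n + q ^ n • y n) y (a n + ε n) := (hPn n).block
      (eventually_atTop.2 ⟨n + 1, fun k hk => hyk _ _ hk⟩)
    have key : ∀ x : E, ‖x‖ ≤ 1 → (u n + q ^ n • y n) x - w x ≤ a n + ε n := by
      intro x hx
      refine le_of_forall_gt_imp_ge_of_dense fun s hs => ?_
      have h1 : ∀ᶠ k in (hyperfilter ℕ : Filter ℕ), (u n + q ^ n • y n) x - y k x < s :=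
        Nat.hyperfilter_le_atTop (hPy x hx s hs)
      exact le_of_tendsto ((hlim x).const_sub _) (h1.mono fun k hk => hk.le)
    refine ContinuousLinearMap.opNorm_le_of_unit_norm (hPy.nonneg) fun x hx => ?_
    have e1 := key x hx.le
    have e2 := key (-x) (by simpa using hx.le)
    rw [map_neg, map_neg] at e2
    rw [Real.norm_eq_abs, abs_le, sub_apply]
    constructor <;> linarith
  have hlow : ∀ n, a n - ε n ≤ ‖u n + q ^ n • y n - w‖ := by
    intro n
    obtain ⟨x, hx, hk⟩ := hxn n
    have h1 : ∀ᶠ k in (hyperfilter ℕ : Filter ℕ), a n - ε n ≤ (u n + q ^ n • y n) x - y k x :=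
      Nat.hyperfilter_le_atTop (eventually_atTop.2
        ⟨n + 1, fun k hk' => james_lower hk (hyk _ _ hk')⟩)
    have h2 := ge_of_tendsto ((hlim x).const_sub ((u n + q ^ n • y n) x)) h1
    have h3 := (u n + q ^ n • y n - w).le_opNorm x
    have h4 := le_abs_self ((u n + q ^ n • y n - w) x)
    rw [Real.norm_eq_abs] at h3
    have h5 : ‖u n + q ^ n • y n - w‖ * ‖x‖ ≤ ‖u n + q ^ n • y n - w‖ * 1 := by gcongr
    rw [sub_apply] at h4
    rw [sub_apply] at h3
    linarith
  have hdist : ∀ n, dist (u n) (u (n + 1)) ≤ (1 - q) * q ^ n := by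
    intro n
    have h0 : 0 ≤ (1 - q) * q ^ n := mul_nonneg (by rw [hq]; norm_num) (by positivity)
    rw [hus, dist_eq_norm, sub_add_cancel_left, norm_neg, norm_smul, Real.norm_of_nonneg h0]
    exact mul_le_of_le_one_right h0 (hyn n)
  have hq1 : q < 1 := by rw [hq]; norm_num
  obtain ⟨v, hv⟩ := cauchySeq_tendsto_of_complete (cauchySeq_of_le_geometric q (1 - q) hq1 hdist)
  have hvn : ∀ n, ‖v - u n‖ ≤ q ^ n := by
    intro n
    have := dist_le_of_le_geometric_of_tendsto q (1 - q) hq1 hdist hv n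
    rw [dist_comm, dist_eq_norm] at this
    rwa [mul_comm, mul_div_assoc, div_self (by linarith), mul_one] at this
  have hqlim : Tendsto (fun n => q ^ n) atTop (𝓝 0) :=
    tendsto_pow_atTop_nhds_zero_of_lt_one hq0.le hq1
  have hεle : ∀ n, ε n ≤ q ^ n := by
    intro n
    have h1 : (1 / 2 : ℝ) ^ n ≤ 1 := pow_le_one₀ (by norm_num) (by norm_num)
    have h2 : q ^ (n + 1) ≤ q ^ n := pow_le_pow_of_le_one hq0.le hq1.le (Nat.le_succ n)
    have h3 : 0 < q ^ (n + 1) := by positivity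
    simp only [ε]
    nlinarith
  set α := ‖v - w‖ with hα
  have haα : ∀ n, a n ≤ α := by
    intro n
    have hl : Tendsto (fun m => α + 3 * q ^ m) atTop (𝓝 (α + 3 * 0)) :=
      tendsto_const_nhds.add (hqlim.const_mul 3)
    rw [mul_zero, add_zero] at hl
    refine ge_of_tendsto hl (eventually_atTop.2 ⟨n, fun m hm => ?_⟩)
    have h1 := hmono hm
    have h2 := hlow m
    have h3 : u m + q ^ m • y m - w = (v - w) - (v - u m) + q ^ m • y m := by abel
    have h4 : ‖q ^ m • y m‖ ≤ q ^ m := by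
      rw [norm_smul, Real.norm_of_nonneg (by positivity)]
      exact mul_le_of_le_one_right (by positivity) (hyn m)
    have h5 := norm_add_le ((v - w) - (v - u m)) (q ^ m • y m)
    have h6 := norm_sub_le (v - w) (v - u m)
    rw [← h3] at h5
    have h7 := hvn m
    have h8 := hεle m
    linarith
  -- partial sums stay away from the norm
  have hpart : ∀ n, ‖u n - (1 - q ^ n) • w‖ ≤ α - q ^ n * (1 / 4 + 1 / 4 * (1 / 2) ^ n) := by
    intro n
    induction n with
    | zero =>
      have := haα 0
      simp [hu0]
      linarith
    | succ n ih =>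
      have h1 : u (n + 1) - (1 - q ^ (n + 1)) • w
          = (1 - q) • (u n + q ^ n • y n - w) + q • (u n - (1 - q ^ n) • w) := by
        rw [hus, pow_succ]
        module
      have h2 := norm_add_le ((1 - q) • (u n + q ^ n • y n - w)) (q • (u n - (1 - q ^ n) • w))
      rw [← h1, norm_smul, norm_smul, Real.norm_of_nonneg hq0.le,
        Real.norm_of_nonneg (sub_nonneg.2 hq1.le)] at h2
      have h3 : ‖u n + q ^ n • y n - w‖ ≤ α + ε n := by
        have := hup n
        have := haα n
        linarith
      have h4 : (1 - q) * ‖u n + q ^ n • y n - w‖ ≤ (1 - q) * (α + ε n) :=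
        mul_le_mul_of_nonneg_left h3 (by linarith)
      have h5 := mul_le_mul_of_nonneg_left ih hq0.le
      have h6 : (1 - q) * ε n ≤ ε n := mul_le_of_le_one_left (hε n).le (by linarith)
      have h7 : q ^ (n + 1) * (1 / 4 + 1 / 4 * (1 / 2) ^ (n + 1))
          = q * (q ^ n * (1 / 4 + 1 / 4 * (1 / 2) ^ n)) - ε n := by
        simp only [ε]
        ring
      rw [h7]
      linarith
  refine ⟨v - w, ?_, fun x hx hatt => ?_⟩
  · rw [← norm_pos_iff]
    have := haα 0
    linarith
  have hall : ∀ n, 1 / 8 ≤ y n x - w x := by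
    intro n
    have h1 : v - w = (u n - (1 - q ^ n) • w) + ((1 - q) * q ^ n) • (y n - w)
        + ((v - u (n + 1)) - q ^ (n + 1) • w) := by
      rw [hus, pow_succ]
      module
    have hb : ∀ h : StrongDual ℝ E, h x ≤ ‖h‖ := by
      intro h
      have := h.le_opNorm x
      rw [Real.norm_eq_abs] at this
      have h5 : ‖h‖ * ‖x‖ ≤ ‖h‖ * 1 := by gcongr
      linarith [le_abs_self (h x)]
    have h2 := hb (u n - (1 - q ^ n) • w)
    have h3 := hb ((v - u (n + 1)) - q ^ (n + 1) • w)
    have h4 := norm_sub_le (v - u (n + 1)) (q ^ (n + 1) • w)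
    have h5 : ‖q ^ (n + 1) • w‖ ≤ q ^ (n + 1) := by
      rw [norm_smul, Real.norm_of_nonneg (by positivity)]
      exact mul_le_of_le_one_right (by positivity) hw
    have h6 := hvn (n + 1)
    have h7 := hpart n
    have h8 : α = (u n - (1 - q ^ n) • w) x + (1 - q) * q ^ n * (y n x - w x)
        + ((v - u (n + 1)) - q ^ (n + 1) • w) x := by
      rw [hα, ← hatt]
      conv_lhs => rw [h1]
      rfl
    have h9 : 0 < q ^ n := by positivity
    have h10 : 0 < q ^ n * (1 / 4 * (1 / 2) ^ n) := by positivity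
    have h11 : q ^ (n + 1) = q ^ n * (1 / 16) := by rw [pow_succ, hq]
    have h12 : q ^ n * (1 / 8) ≤ q ^ n * ((1 - q) * (y n x - w x)) := by
      generalize ‖v - u (n + 1) - q ^ (n + 1) • w‖ = b1 at *
      generalize (v - u (n + 1) - q ^ (n + 1) • w) x = b2 at *
      generalize ‖q ^ (n + 1) • w‖ = b3 at *
      linarith
    have h13 := le_of_mul_le_mul_left h12 h9
    rw [hq] at h13
    linarith
  have := ge_of_tendsto ((hlim x).sub_const (w x)) (Eventually.of_forall hall)
  norm_num at this

end

theorem james_rclike {𝕜 E : Type*} [RCLike 𝕜] [NormedAddCommGroup E] [NormedSpace 𝕜 E]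
    [CompleteSpace E] (hnr : ¬ Function.Surjective (NormedSpace.inclusionInDoubleDual 𝕜 E)) :
    ∃ φ : StrongDual 𝕜 E, φ ≠ 0 ∧ ∀ x : E, ‖x‖ ≤ 1 → ‖φ x‖ ≠ ‖φ‖ := by
  let _ : NormedSpace ℝ E := NormedSpace.restrictScalars ℝ 𝕜 E
  have : IsScalarTower ℝ 𝕜 E := RestrictScalars.isScalarTower _ _ _
  have hnr' : ¬ Function.Surjective (NormedSpace.inclusionInDoubleDual ℝ E) := by
    intro hs
    refine hnr fun X => ?_
    let e : StrongDual ℝ E ≃ₗᵢ[ℝ] StrongDual 𝕜 E := StrongDual.extendRCLikeₗᵢ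
    let X' : StrongDual ℝ (StrongDual ℝ E) :=
      (RCLike.reCLM.comp (X.restrictScalars ℝ)).comp e.toContinuousLinearEquiv.toContinuousLinearMap
    obtain ⟨x, hx⟩ := hs X'
    have hre : ∀ h : StrongDual 𝕜 E, RCLike.re (h x) = RCLike.re (X h) := by
      intro h
      have h1 := DFunLike.congr_fun hx (e.symm h)
      have h2 : X' (e.symm h) = RCLike.re (X h) := by simp [X']
      rw [h2, NormedSpace.dual_def] at h1
      rw [← h1]
      rfl
    refine ⟨x, ?_⟩
    ext h
    rw [NormedSpace.dual_def]
    refine RCLike.ext (hre h) ?_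
    have := hre ((RCLike.I : 𝕜) • h)
    rw [map_smul, smul_apply, smul_eq_mul, smul_eq_mul, RCLike.I_mul_re, RCLike.I_mul_re] at this
    linarith
  obtain ⟨g, hg0, hg⟩ := james_real hnr'
  let e : StrongDual ℝ E ≃ₗᵢ[ℝ] StrongDual 𝕜 E := StrongDual.extendRCLikeₗᵢ
  refine ⟨e g, by simpa using hg0, fun x hx hatt => ?_⟩
  obtain ⟨c, hc, hcx⟩ := RCLike.exists_norm_eq_mul_self (e g x)
  refine hg (c • x) (by rw [norm_smul, hc, one_mul]; exact hx) ?_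
  have h1 : g (c • x) = RCLike.re (e g (c • x)) := (StrongDual.re_extendRCLike_apply g _).symm
  rw [h1, map_smul, smul_eq_mul, ← hcx, RCLike.ofReal_re, hatt, e.norm_map]

/-- if `E` is a non-reflexive Banach space (the canonical embedding into
the bidual is not surjective) and `F ≠ {0}`, then the pair `(E, F)` fails the weak
maximizing property: some bounded operator `E → F` has a non-weakly null maximizing
sequence yet does not attain its norm. -/
theorem nonreflexive_fails_weak_maximizing {𝕜 E F : Type*} [RCLike 𝕜]
    [NormedAddCommGroup E] [NormedSpace 𝕜 E] [CompleteSpace E]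
    [NormedAddCommGroup F] [NormedSpace 𝕜 F] [CompleteSpace F] [Nontrivial F]
    (hnonrefl : ¬ Function.Surjective (NormedSpace.inclusionInDoubleDual 𝕜 E)) :
    ¬ (∀ S : E →L[𝕜] F,
      (∃ x : ℕ → E, (∀ n, ‖x n‖ = 1) ∧
        Tendsto (fun n => ‖S (x n)‖) atTop (𝓝 ‖S‖) ∧
        ¬ ∀ f : E →L[𝕜] 𝕜, Tendsto (fun n => f (x n)) atTop (𝓝 0)) →
      ∃ x₀, ‖x₀‖ = 1 ∧ ‖S x₀‖ = ‖S‖) := by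
  obtain ⟨φ, hφ0, hφ⟩ := james_rclike hnonrefl
  obtain ⟨y₀, hy₀⟩ := exists_ne (0 : F)
  have hpos : 0 < ‖φ‖ := norm_pos_iff.2 hφ0
  have hy : 0 < ‖y₀‖ := norm_pos_iff.2 hy₀
  intro H
  have hseq : ∀ n : ℕ, ∃ x : E, ‖x‖ = 1 ∧ ‖φ‖ - ‖φ‖ * (1 / ((n : ℝ) + 2)) < ‖φ x‖ := by
    intro n
    have hn : (0 : ℝ) < 1 / ((n : ℝ) + 2) := by positivity
    have hn1 : 1 / ((n : ℝ) + 2) < 1 := by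
      rw [div_lt_one (by positivity)]
      have : (0 : ℝ) ≤ n := n.cast_nonneg
      linarith
    obtain ⟨x, hx1, hx2⟩ := φ.exists_lt_apply_of_lt_opNorm
      (show ‖φ‖ - ‖φ‖ * (1 / ((n : ℝ) + 2)) < ‖φ‖ by nlinarith)
    have hx0 : 0 < ‖x‖ := by
      rw [norm_pos_iff]
      rintro rfl
      simp only [map_zero, norm_zero] at hx2
      nlinarith
    refine ⟨((‖x‖⁻¹ : ℝ) : 𝕜) • x, ?_, ?_⟩
    · rw [norm_smul, RCLike.norm_ofReal, abs_of_pos (by positivity), inv_mul_cancel₀ hx0.ne']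
    · rw [map_smul, norm_smul, RCLike.norm_ofReal, abs_of_pos (by positivity)]
      refine hx2.trans_le ?_
      exact le_mul_of_one_le_left (norm_nonneg _) ((one_le_inv₀ hx0).2 hx1.le)
  choose x hx1 hx2 using hseq
  have hlim : Tendsto (fun n => ‖φ (x n)‖) atTop (𝓝 ‖φ‖) := by
    refine tendsto_of_tendsto_of_tendsto_of_le_of_le (g := fun n : ℕ => ‖φ‖ - ‖φ‖ * (1 / ((n : ℝ) + 2)))
      (h := fun _ => ‖φ‖) ?_ tendsto_const_nhds (fun n => (hx2 n).le) fun n => ?_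
    · have h0 : Tendsto (fun n : ℕ => 1 / ((n : ℝ) + 2)) atTop (𝓝 0) := by
        simp only [one_div]
        exact tendsto_inv_atTop_zero.comp
          (tendsto_atTop_add_const_right _ _ tendsto_natCast_atTop_atTop)
      simpa using (h0.const_mul ‖φ‖).const_sub ‖φ‖
    · have := φ.le_opNorm (x n)
      rwa [hx1, mul_one] at this
  obtain ⟨x₀, hx₀, hatt⟩ := H (φ.smulRight y₀) ⟨x, hx1, by
    simp only [ContinuousLinearMap.smulRight_apply, norm_smul,
      ContinuousLinearMap.norm_smulRight_apply]
    exact hlim.mul_const _, fun hw => by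
      have h1 := (hw φ).norm
      rw [norm_zero] at h1
      exact hpos.ne (tendsto_nhds_unique h1 hlim)⟩
  rw [ContinuousLinearMap.smulRight_apply, norm_smul,
    ContinuousLinearMap.norm_smulRight_apply] at hatt
  exact hφ x₀ hx₀.le (mul_right_cancel₀ hy.ne' hatt)
end
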